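/- arXiv:1412.1252 — 5 statements merged into one kernel-verified Lean document; each statement's English description precedes it below -/
import Mathlib

section
/- The function H̃(u,v) = p·(μ₂·u²/2 + b·u³/3) + (a + μ₁·u)·cos v is a first integral of system (m1): if (u(τ), v(τ)) is any differentiable solution of system (m1) on an interval, then the function τ ↦ H̃(u(τ), v(τ)) is constant on that interval. -/
open Real

/-- `H̃(u,v) = p·(μ₂·u²/2 + b·u³/3) + (a + μ₁·u)·cos v` is a first
integral of system (m1): along any differentiable solution `(u(τ), v(τ))` on an
interval (an order-connected set), `H̃(u(τ), v(τ))` is constant. -/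
theorem stmt_1 (a b μ₁ μ₂ : ℝ) (p : ℕ) (hp : 0 < p)
    (s : Set ℝ) (hs : s.OrdConnected) (u v : ℝ → ℝ)
    (hu : ∀ τ ∈ s, HasDerivAt u ((a + μ₁ * u τ) * Real.sin (v τ)) τ)
    (hv : ∀ τ ∈ s, HasDerivAt v
      ((p : ℝ) * (b * u τ ^ 2 + μ₂ * u τ) + μ₁ * Real.cos (v τ)) τ) :
    ∀ τ₁ ∈ s, ∀ τ₂ ∈ s,
      (p : ℝ) * (μ₂ * u τ₁ ^ 2 / 2 + b * u τ₁ ^ 3 / 3) +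
        (a + μ₁ * u τ₁) * Real.cos (v τ₁)
      = (p : ℝ) * (μ₂ * u τ₂ ^ 2 / 2 + b * u τ₂ ^ 3 / 3) +
        (a + μ₁ * u τ₂) * Real.cos (v τ₂) := by
  intro τ₁ h₁ τ₂ h₂
  have key : ∀ τ ∈ s, HasDerivWithinAt
      (fun τ => (p : ℝ) * (μ₂ * u τ ^ 2 / 2 + b * u τ ^ 3 / 3) +
        (a + μ₁ * u τ) * Real.cos (v τ)) 0 s τ := by
    intro τ hτ
    have h := (((((hu τ hτ).pow 2).const_mul μ₂).div_const 2).add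
      ((((hu τ hτ).pow 3).const_mul b).div_const 3)).const_mul (p : ℝ)
    have h' := h.add ((((hu τ hτ).const_mul μ₁).const_add a).mul (hv τ hτ).cos)
    refine HasDerivAt.hasDerivWithinAt (HasDerivAt.congr_deriv h' ?_)
    push_cast
    ring
  have h := hs.convex.norm_image_sub_le_of_norm_hasDerivWithin_le (C := 0) key
    (fun τ _ => by simp) h₂ h₁
  rw [zero_mul] at h
  exact sub_eq_zero.mp (norm_le_zero_iff.mp h)
end

section
/- For system (m1) with a = 2 and b = 1, if the parameters lie on the bifurcation parabola p·μ₂² − 4μ₁ = 0, then (−μ₂/2, 0) is an equilibrium of the system and the Jacobian matrix of the vector field at this equilibrium has both trace and determinant equal to zero, so both eigenvalues of the linearization are zero (the equilibrium O₁± has become a degenerate double equilibrium). -/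
open Real Polynomial

/-- An equilibrium of system (m1): both right-hand sides
`(a + μ₁u)·sin v` and `p·(b·u² + μ₂·u) + μ₁·cos v` vanish. -/
def IsM1Equil (a b μ₁ μ₂ : ℝ) (p : ℕ) (q : ℝ × ℝ) : Prop :=
  (a + μ₁ * q.1) * Real.sin q.2 = 0 ∧
  (p : ℝ) * (b * q.1 ^ 2 + μ₂ * q.1) + μ₁ * Real.cos q.2 = 0

/-- The Jacobian matrix of the vector field of system (m1) at the point `(u, v)`:
the 2×2 matrix of partial derivatives of the right-hand sides with respect to
`u` and `v`. -/
noncomputable def m1Jacobian (a b μ₁ μ₂ : ℝ) (p : ℕ) (u v : ℝ) :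
    Matrix (Fin 2) (Fin 2) ℝ :=
  !![deriv (fun u' : ℝ => (a + μ₁ * u') * Real.sin v) u,
     deriv (fun v' : ℝ => (a + μ₁ * u) * Real.sin v') v;
     deriv (fun u' : ℝ => (p : ℝ) * (b * u' ^ 2 + μ₂ * u') + μ₁ * Real.cos v) u,
     deriv (fun v' : ℝ => (p : ℝ) * (b * u ^ 2 + μ₂ * u) + μ₁ * Real.cos v') v]

/-- for system (m1) with `a = 2`, `b = 1`, on the bifurcation
parabola `p·μ₂² − 4μ₁ = 0` the point `(−μ₂/2, 0)` is an equilibrium whose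
Jacobian matrix has zero trace and zero determinant, hence both eigenvalues of
the linearization are zero (its characteristic polynomial is `λ²`). -/
theorem stmt_9 (μ₁ μ₂ : ℝ) (p : ℕ) (hp : 0 < p)
    (h : (p : ℝ) * μ₂ ^ 2 - 4 * μ₁ = 0) :
    IsM1Equil 2 1 μ₁ μ₂ p (-μ₂ / 2, 0) ∧
    (m1Jacobian 2 1 μ₁ μ₂ p (-μ₂ / 2) 0).trace = 0 ∧
    (m1Jacobian 2 1 μ₁ μ₂ p (-μ₂ / 2) 0).det = 0 ∧
    (m1Jacobian 2 1 μ₁ μ₂ p (-μ₂ / 2) 0).charpoly = X ^ 2 := by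
  have hd : deriv (fun u' : ℝ => (p : ℝ) * (1 * u' ^ 2 + μ₂ * u') + μ₁ * Real.cos 0) (-μ₂ / 2)
      = 0 := by
    have h1 : HasDerivAt (fun u' : ℝ => (p : ℝ) * (1 * u' ^ 2 + μ₂ * u') + μ₁ * Real.cos 0)
        ((p : ℝ) * (1 * (((2 : ℕ) : ℝ) * (-μ₂ / 2) ^ (2 - 1)) + μ₂ * 1)) (-μ₂ / 2) :=
      ((((hasDerivAt_pow 2 (-μ₂ / 2)).const_mul 1).add
        ((hasDerivAt_id (-μ₂ / 2)).const_mul μ₂)).const_mul (p : ℝ)).add_const _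
    rw [h1.deriv]
    norm_num
    right
    ring
  have hv : deriv (fun v' : ℝ => (p : ℝ) * (1 * (-μ₂ / 2) ^ 2 + μ₂ * (-μ₂ / 2))
      + μ₁ * Real.cos v') 0 = 0 := by
    have h1 := ((Real.hasDerivAt_cos 0).const_mul μ₁).const_add
      ((p : ℝ) * (1 * (-μ₂ / 2) ^ 2 + μ₂ * (-μ₂ / 2)))
    rw [h1.deriv]
    simp
  have hu : deriv (fun u' : ℝ => ((2 : ℝ) + μ₁ * u') * Real.sin 0) (-μ₂ / 2) = 0 := by
    simp
  have htr : (m1Jacobian 2 1 μ₁ μ₂ p (-μ₂ / 2) 0).trace = 0 := by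
    rw [m1Jacobian, hd, hv, hu, Matrix.trace_fin_two_of, add_zero]
  have hdet : (m1Jacobian 2 1 μ₁ μ₂ p (-μ₂ / 2) 0).det = 0 := by
    rw [m1Jacobian, hd, hv, hu, Matrix.det_fin_two_of]
    ring
  refine ⟨⟨by simp, ?_⟩, htr, hdet, ?_⟩
  · simp only [Real.cos_zero]
    linear_combination (-1 / 4) * h
  · rw [Matrix.charpoly_fin_two, htr, hdet]
    simp
end

section
/- For system (m1) with a = 2 and b = 1, if the parameters lie on the bifurcation parabola p·μ₂² + 4μ₁ = 0, then (−μ₂/2, π) is an equilibrium of the system and the Jacobian matrix of the vector field at this equilibrium has both trace and determinant equal to zero, so both eigenvalues of the linearization are zero (the equilibrium O₂± has become a degenerate double equilibrium). -/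
open Real Polynomial

/-- for system (m1) with `a = 2`, `b = 1`, on the bifurcation
parabola `p·μ₂² + 4μ₁ = 0` the point `(−μ₂/2, π)` is an equilibrium whose
Jacobian matrix has zero trace and zero determinant, hence both eigenvalues of
the linearization are zero (its characteristic polynomial is `λ²`). -/
theorem stmt_10 (μ₁ μ₂ : ℝ) (p : ℕ) (hp : 0 < p)
    (h : (p : ℝ) * μ₂ ^ 2 + 4 * μ₁ = 0) :
    IsM1Equil 2 1 μ₁ μ₂ p (-μ₂ / 2, π) ∧
    (m1Jacobian 2 1 μ₁ μ₂ p (-μ₂ / 2) π).trace = 0 ∧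
    (m1Jacobian 2 1 μ₁ μ₂ p (-μ₂ / 2) π).det = 0 ∧
    (m1Jacobian 2 1 μ₁ μ₂ p (-μ₂ / 2) π).charpoly = X ^ 2 := by
  have h1 : deriv (fun u' : ℝ => (2 + μ₁ * u') * Real.sin π) (-μ₂ / 2) = 0 := by simp
  have h3 : deriv (fun u' : ℝ => (p : ℝ) * (1 * u' ^ 2 + μ₂ * u') + μ₁ * Real.cos π)
      (-μ₂ / 2) = 0 := by
    have hd : HasDerivAt (fun u' : ℝ => (p : ℝ) * (1 * u' ^ 2 + μ₂ * u') + μ₁ * Real.cos π)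
        ((p : ℝ) * (1 * (((2 : ℕ) : ℝ) * (-μ₂ / 2) ^ (2 - 1)) + μ₂ * 1)) (-μ₂ / 2) :=
      ((((hasDerivAt_pow 2 (-μ₂ / 2)).const_mul 1).add
        ((hasDerivAt_id (-μ₂ / 2)).const_mul μ₂)).const_mul (p : ℝ)).add_const _
    rw [hd.deriv]
    norm_num
    right
    ring
  have h4 : deriv (fun v' : ℝ => (p : ℝ) * (1 * (-μ₂ / 2) ^ 2 + μ₂ * (-μ₂ / 2))
      + μ₁ * Real.cos v') π = 0 := by
    have hd := ((Real.hasDerivAt_cos π).const_mul μ₁).const_add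
      ((p : ℝ) * (1 * (-μ₂ / 2) ^ 2 + μ₂ * (-μ₂ / 2)))
    rw [hd.deriv]
    simp
  have ht : (m1Jacobian 2 1 μ₁ μ₂ p (-μ₂ / 2) π).trace = 0 := by
    unfold m1Jacobian
    rw [Matrix.trace_fin_two_of, h1, h4, add_zero]
  have hdet : (m1Jacobian 2 1 μ₁ μ₂ p (-μ₂ / 2) π).det = 0 := by
    unfold m1Jacobian
    rw [Matrix.det_fin_two_of, h1, h3, zero_mul, mul_zero, sub_zero]
  refine ⟨⟨by simp, ?_⟩, ht, hdet, ?_⟩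
  · simp only [Real.cos_pi]
    linarith
  · rw [Matrix.charpoly_fin_two, ht, hdet]
    simp
end

section
/- For system (m1) with a = 2, b = 1 and μ₁ ≠ 0, if the parameters satisfy 2p·(μ₁μ₂ − 2) = μ₁³ (the boundary case of condition (m2), corresponding to the bifurcation curve (m5)), then the point (−2/μ₁, 0) is an equilibrium of the system, and the Jacobian matrix of the vector field at this equilibrium has both trace and determinant equal to zero, so both eigenvalues of the linearization are zero. -/
open Real Polynomial

/-- for system (m1) with `a = 2`, `b = 1`, `μ₁ ≠ 0`, if
`2p(μ₁μ₂ − 2) = μ₁³` (the boundary case of condition (m2), i.e. the bifurcation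
curve (m5)), then `(−2/μ₁, 0)` is an equilibrium whose Jacobian matrix has zero
trace and zero determinant, hence both eigenvalues of the linearization are zero
(its characteristic polynomial is `λ²`). -/
theorem stmt_11 (μ₁ μ₂ : ℝ) (p : ℕ) (hp : 0 < p) (hμ₁ : μ₁ ≠ 0)
    (h : 2 * (p : ℝ) * (μ₁ * μ₂ - 2) = μ₁ ^ 3) :
    IsM1Equil 2 1 μ₁ μ₂ p (-2 / μ₁, 0) ∧
    (m1Jacobian 2 1 μ₁ μ₂ p (-2 / μ₁) 0).trace = 0 ∧
    (m1Jacobian 2 1 μ₁ μ₂ p (-2 / μ₁) 0).det = 0 ∧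
    (m1Jacobian 2 1 μ₁ μ₂ p (-2 / μ₁) 0).charpoly = X ^ 2 := by
  have hz : 2 + μ₁ * (-2 / μ₁) = 0 := by field_simp; ring
  obtain ⟨c, hc⟩ : ∃ c : ℝ, m1Jacobian 2 1 μ₁ μ₂ p (-2 / μ₁) 0 = !![0, 0; c, 0] := by
    refine ⟨deriv (fun u' : ℝ => (p : ℝ) * (1 * u' ^ 2 + μ₂ * u') + μ₁ * Real.cos 0) (-2 / μ₁), ?_⟩
    unfold m1Jacobian
    rw [hz]
    simp
  refine ⟨⟨?_, ?_⟩, ?_, ?_, ?_⟩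
  · simp [hz]
  · simp only [Real.cos_zero]
    field_simp
    linarith
  · rw [hc]; simp [Matrix.trace_fin_two]
  · rw [hc]; simp [Matrix.det_fin_two]
  · rw [hc, Matrix.charpoly_fin_two]; simp [Matrix.trace_fin_two, Matrix.det_fin_two]
end

section
/- The map (mm2), T: (u,v) ↦ (U, V) with U = (u + α·a·sin v)/(1 − α·μ₁·sin v) and V = v + α·(p·b·U² + μ₂·p·U + μ₁·cos v), is area preserving on its domain of definition: at every point (u,v) with 1 − α·μ₁·sin v ≠ 0, the determinant of the Jacobian matrix of T equals 1. -/
open Real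

lemma det_aux (A B C E : ℝ) :
    LinearMap.det (((A • ContinuousLinearMap.fst ℝ ℝ ℝ + B • ContinuousLinearMap.snd ℝ ℝ ℝ).prod
      (C • ContinuousLinearMap.fst ℝ ℝ ℝ + E • ContinuousLinearMap.snd ℝ ℝ ℝ) :
        ℝ × ℝ →L[ℝ] ℝ × ℝ) : ℝ × ℝ →ₗ[ℝ] ℝ × ℝ) = A * E - B * C := by
  rw [← LinearMap.det_toMatrix (Module.Basis.finTwoProd ℝ), Matrix.det_fin_two]
  simp [LinearMap.toMatrix_apply]

/-- the map (mm2),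
`T(u,v) = (U, v + α(p·b·U² + μ₂·p·U + μ₁·cos v))` with
`U = (u + α·a·sin v)/(1 − α·μ₁·sin v)`, is area preserving on its domain of
definition: at every point where `1 − α·μ₁·sin v ≠ 0` it is differentiable and
the determinant of its Jacobian equals 1. -/
theorem stmt_13 (α a b μ₁ μ₂ : ℝ) (p : ℕ) (hp : 0 < p) :
    ∀ x : ℝ × ℝ, 1 - α * μ₁ * Real.sin x.2 ≠ 0 →
      ∃ D : ℝ × ℝ →L[ℝ] ℝ × ℝ,
        HasFDerivAt (fun q : ℝ × ℝ =>
          ((q.1 + α * a * Real.sin q.2) / (1 - α * μ₁ * Real.sin q.2),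
           q.2 + α * ((p : ℝ) * b *
              ((q.1 + α * a * Real.sin q.2) / (1 - α * μ₁ * Real.sin q.2)) ^ 2 +
            μ₂ * p * ((q.1 + α * a * Real.sin q.2) / (1 - α * μ₁ * Real.sin q.2)) +
            μ₁ * Real.cos q.2))) D x ∧
        LinearMap.det (D : ℝ × ℝ →ₗ[ℝ] ℝ × ℝ) = 1 := by
  intro x hx
  have h1 : HasFDerivAt (fun q : ℝ × ℝ => q.1) (ContinuousLinearMap.fst ℝ ℝ ℝ) x := hasFDerivAt_fst
  have h2 : HasFDerivAt (fun q : ℝ × ℝ => q.2) (ContinuousLinearMap.snd ℝ ℝ ℝ) x := hasFDerivAt_snd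
  have hs := h2.sin
  have hc := h2.cos
  have hN := h1.add (hs.const_mul (α * a))
  have hd := (hs.const_mul (α * μ₁)).const_sub 1
  have hi := (hasDerivAt_inv hx).comp_hasFDerivAt x hd
  have hU0 := hN.mul hi
  obtain ⟨B, hU⟩ : ∃ B : ℝ, HasFDerivAt (fun q : ℝ × ℝ =>
      (q.1 + α * a * Real.sin q.2) / (1 - α * μ₁ * Real.sin q.2))
      ((1 - α * μ₁ * Real.sin x.2)⁻¹ • ContinuousLinearMap.fst ℝ ℝ ℝ +
        B • ContinuousLinearMap.snd ℝ ℝ ℝ) x := by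
    refine ⟨(x.1 + α * a * Real.sin x.2) * (α * μ₁ * Real.cos x.2) /
      (1 - α * μ₁ * Real.sin x.2) ^ 2 +
      α * a * Real.cos x.2 / (1 - α * μ₁ * Real.sin x.2), ?_⟩
    refine hU0.congr_fderiv ?_
    ext <;> simp <;> ring
  set U := fun q : ℝ × ℝ =>
      (q.1 + α * a * Real.sin q.2) / (1 - α * μ₁ * Real.sin q.2) with hUdef
  have hV := h2.add (((((hU.pow 2).const_mul ((p : ℝ) * b)).add
    (hU.const_mul (μ₂ * p))).add (hc.const_mul μ₁)).const_mul α)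
  refine ⟨((1 - α * μ₁ * Real.sin x.2)⁻¹ • ContinuousLinearMap.fst ℝ ℝ ℝ +
        B • ContinuousLinearMap.snd ℝ ℝ ℝ).prod
      ((α * (p * b * (2 * U x) + μ₂ * p) * (1 - α * μ₁ * Real.sin x.2)⁻¹) •
        ContinuousLinearMap.fst ℝ ℝ ℝ +
      (1 + α * ((p * b * (2 * U x) + μ₂ * p) * B - μ₁ * Real.sin x.2)) •
        ContinuousLinearMap.snd ℝ ℝ ℝ), hU.prodMk (hV.congr_fderiv ?_), ?_⟩
  · ext <;> simp <;> ring
  · rw [det_aux]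
    field_simp
    ring
end
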